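/- The Witten zeta function ζ_{so(5)}(s) = 6^s ∑_{m,n≥1} (m n (m+n)(m+2n))^{-s} has a simple pole at s = 1/3 with residue (2^{1/3} + 1) · ζ(1/3) / 3^{2/3}, where ζ is the Riemann zeta function. -/

import Mathlib

open Filter Topology

/-!
Split the double sum according to `m = n`, `m > n` and `m < n`. The diagonal gives `ζ(4s)`, regular
at `1/3`. Writing `n` for the smaller entry and `k` for the difference, each of the other two parts
is a sum over `n, k ≥ 1` of `(n ^ (d + 1) * p(k / n)) ^ (-s)`, where `d = 3` and `p` is a cubic
positive on `[0, ∞)`. Up to a power of `n` the inner sum over `k` is a Riemann sum, so it equals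
`n ^ (1 - (d + 1) s) * (∫ p ^ (-s) + O(1 / n))`: the main term produces the factor
`ζ((d + 1) s - 1)`, and the errors sum to a function that is holomorphic for `re s > 1 / (d + 1)`.
Replacing `p` by its leading term `c (x + 1) ^ d` changes the integral by a function holomorphic for
`re s > 0`, and `∫ (c (x + 1) ^ d) ^ (-s) = c ^ (-s) / (d s - 1)` carries the pole at `s = 1 / d`,
where the zeta factor takes the value `ζ(1 / d)`.
-/

namespace WittenZeta

open MeasureTheory Polynomial Set

section ComplexAnalysis

lemma isPreconnected_re_gt_diff_countable (a : ℝ) {S : Set ℂ} (hS : S.Countable) :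
    IsPreconnected ({s : ℂ | a < s.re} \ S) := by
  let φ : ℂ → ℂ := fun z ↦ (a + Real.exp z.re : ℝ) + z.im * Complex.I
  have φ_re (z : ℂ) : (φ z).re = a + Real.exp z.re := by
    simp [φ, -Complex.ofReal_exp, -Complex.ofReal_add]
  have φ_im (z : ℂ) : (φ z).im = z.im := by
    simp [φ, -Complex.ofReal_exp, -Complex.ofReal_add]
  have φ_injective : Function.Injective φ := fun z w h ↦ Complex.ext
    (Real.exp_injective (add_left_cancel (by rw [← φ_re z, ← φ_re w, h])))
    (by rw [← φ_im z, ← φ_im w, h])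
  have φ_image : {s : ℂ | a < s.re} \ S = φ '' (φ ⁻¹' S)ᶜ := by
    have φ_range : range φ = {s : ℂ | a < s.re} := by
      ext s
      refine ⟨?_, fun hs ↦ ⟨⟨Real.log (s.re - a), s.im⟩, Complex.ext ?_ (φ_im _)⟩⟩
      · rintro ⟨z, rfl⟩
        simpa [φ_re] using Real.exp_pos z.re
      · rw [φ_re, Real.exp_log (sub_pos.2 hs), add_sub_cancel]
    rw [← preimage_compl, image_preimage_eq_inter_range, φ_range, inter_comm, sdiff_eq]
  rw [φ_image]
  refine ((hS.preimage_of_injOn φ_injective.injOn).isConnected_compl_of_one_lt_rank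
    (by simp)).isPreconnected.image φ ?_
  fun_prop

lemma eqOn_re_gt_diff_of_eqOn_re_gt {f g : ℂ → ℂ} {a b : ℝ} {S : Set ℂ} (hS : S.Finite)
    (hf : DifferentiableOn ℂ f ({s | a < s.re} \ S))
    (hg : DifferentiableOn ℂ g ({s | a < s.re} \ S)) (hfg : EqOn f g {s | b < s.re}) :
    EqOn f g ({s | a < s.re} \ S) := by
  have hopen (c : ℝ) : IsOpen {s : ℂ | c < s.re} :=
    isOpen_lt continuous_const Complex.continuous_re
  have hopen_diff : IsOpen ({s : ℂ | a < s.re} \ S) := (hopen a).sdiff hS.isClosed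
  obtain ⟨z, hz, hzS⟩ := (hS.countable.dense_compl ℝ).inter_open_nonempty _ (hopen (max a b))
    ⟨(max a b + 1 : ℝ), lt_add_one (max a b)⟩
  exact (hf.analyticOnNhd hopen_diff).eqOn_of_preconnected_of_eventuallyEq
    (hg.analyticOnNhd hopen_diff) (isPreconnected_re_gt_diff_countable a hS.countable)
    ⟨(le_max_left a b).trans_lt hz, hzS⟩
    (hfg.eventuallyEq_of_mem ((hopen b).mem_nhds ((le_max_right a b).trans_lt hz)))

/-- The bounded pieces `{s | σ < re s, ‖s‖ < M}` of a half-plane, on which the estimates below are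
uniform. -/
def truncatedHalfPlane (σ M : ℝ) : Set ℂ := {s | σ < s.re ∧ ‖s‖ < M}

lemma isOpen_truncatedHalfPlane (σ M : ℝ) : IsOpen (truncatedHalfPlane σ M) :=
  (isOpen_lt continuous_const Complex.continuous_re).inter
    (isOpen_lt continuous_norm continuous_const)

lemma differentiableOn_re_gt_of_truncatedHalfPlane {f : ℂ → ℂ} {a : ℝ}
    (hf : ∀ σ M, a < σ → DifferentiableOn ℂ f (truncatedHalfPlane σ M)) :
    DifferentiableOn ℂ f {s | a < s.re} := by
  intro s hs
  obtain ⟨σ, haσ, hσs⟩ := exists_between (show a < s.re from hs)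
  have hmem : truncatedHalfPlane σ (‖s‖ + 1) ∈ 𝓝 s :=
    (isOpen_truncatedHalfPlane _ _).mem_nhds ⟨hσs, lt_add_one _⟩
  exact ((hf σ _ haσ).differentiableAt hmem).differentiableWithinAt

section Integral

variable {α E : Type*} [MeasurableSpace α] {μ : Measure α} [NormedAddCommGroup E] [NormedSpace ℂ E]
  {V : Set ℂ} {F : ℂ → α → E}

lemma aestronglyMeasurable_deriv_of_differentiableOn (hV : IsOpen V)
    (hF_meas : ∀ s ∈ V, AEStronglyMeasurable (F s) μ)
    (hF_diff : ∀ᵐ x ∂μ, DifferentiableOn ℂ (F · x) V) {s₀ : ℂ} (hs₀ : s₀ ∈ V) :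
    AEStronglyMeasurable (fun x ↦ deriv (F · x) s₀) μ := by
  obtain ⟨ε, hε, hball⟩ := Metric.isOpen_iff.1 hV s₀ hs₀
  let h : ℕ → ℂ := fun n ↦ ((ε / 2 * (1 / (n + 1)) : ℝ) : ℂ)
  have h_pos (n : ℕ) : 0 < ε / 2 * (1 / ((n : ℝ) + 1)) := by positivity
  have h_mem (n : ℕ) : s₀ + h n ∈ V := by
    refine hball ?_
    have : 1 / ((n : ℝ) + 1) ≤ 1 := by
      rw [div_le_one (by positivity)]
      linarith [n.cast_nonneg (α := ℝ)]
    rw [mem_ball_iff_norm, add_sub_cancel_left, Complex.norm_of_nonneg (h_pos n).le]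
    nlinarith
  have h_tendsto : Tendsto h atTop (𝓝[≠] 0) := by
    refine tendsto_nhdsWithin_iff.2 ⟨?_, .of_forall fun n ↦ ?_⟩
    · simpa [h, Function.comp_def] using (Complex.continuous_ofReal.tendsto _).comp
        (tendsto_one_div_add_atTop_nhds_zero_nat.const_mul (ε / 2))
    · exact Complex.ofReal_ne_zero.2 (h_pos n).ne'
  refine aestronglyMeasurable_of_tendsto_ae atTop
    (f := fun n x ↦ (h n)⁻¹ • (F (s₀ + h n) x - F s₀ x))
    (fun n ↦ ((hF_meas _ (h_mem n)).sub (hF_meas _ hs₀)).const_smul _) ?_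
  filter_upwards [hF_diff] with x hx
  exact (hx.differentiableAt (hV.mem_nhds hs₀)).hasDerivAt.tendsto_slope_zero.comp h_tendsto

lemma differentiableOn_integral_of_norm_le [CompleteSpace E] (hV : IsOpen V) {g : α → ℝ}
    (hF_meas : ∀ s ∈ V, AEStronglyMeasurable (F s) μ)
    (hF_diff : ∀ᵐ x ∂μ, DifferentiableOn ℂ (F · x) V) (hg : Integrable g μ)
    (hF_le : ∀ᵐ x ∂μ, ∀ s ∈ V, ‖F s x‖ ≤ g x) :
    DifferentiableOn ℂ (fun s ↦ ∫ x, F s x ∂μ) V := by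
  intro s₀ hs₀
  obtain ⟨ε, hε, hball⟩ := Metric.isOpen_iff.1 hV s₀ hs₀
  refine (hasDerivAt_integral_of_dominated_loc_of_deriv_le (bound := fun x ↦ g x / (ε / 2))
    (F' := fun s x ↦ deriv (F · x) s) (Metric.ball_mem_nhds s₀ (half_pos hε)) ?_ ?_
    (aestronglyMeasurable_deriv_of_differentiableOn hV hF_meas hF_diff hs₀)
    ?_ (hg.div_const _) ?_).2.differentiableAt.differentiableWithinAt
  · filter_upwards [hV.mem_nhds hs₀] with s hs using hF_meas s hs
  · exact hg.mono' (hF_meas s₀ hs₀) (hF_le.mono fun x hx ↦ hx s₀ hs₀)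
  · filter_upwards [hF_diff, hF_le] with x hx hx_le s hs
    have hsub : Metric.closedBall s (ε / 2) ⊆ V := fun z hz ↦ hball <| by
      rw [Metric.mem_ball, Metric.mem_closedBall] at *
      linarith [dist_triangle z s s₀]
    exact Complex.norm_deriv_le_of_forall_mem_sphere_norm_le (half_pos hε)
      (hx.diffContOnCl_ball hsub)
      fun z hz ↦ hx_le z (hsub (Metric.sphere_subset_closedBall hz))
  · filter_upwards [hF_diff] with x hx s hs
    exact (hx.differentiableAt (hV.mem_nhds (hball
      (Metric.ball_subset_ball (half_le_self hε.le) hs)))).hasDerivAt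

end Integral

end ComplexAnalysis

section Polynomial

variable (p : ℝ[X])

lemma exists_abs_eval_le {m : ℕ} (hm : p.natDegree ≤ m) :
    ∃ K, 0 ≤ K ∧ ∀ x, 0 ≤ x → |p.eval x| ≤ K * (x + 1) ^ m := by
  refine ⟨∑ i ∈ Finset.range (m + 1), |p.coeff i|, by positivity, fun x hx ↦ ?_⟩
  rw [eval_eq_sum_range' (Nat.lt_succ_of_le hm), Finset.sum_mul]
  refine (Finset.abs_sum_le_sum_abs _ _).trans (Finset.sum_le_sum fun i hi ↦ ?_)
  rw [abs_mul, abs_of_nonneg (pow_nonneg hx i)]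
  gcongr
  calc x ^ i ≤ (x + 1) ^ i := by gcongr; linarith
    _ ≤ (x + 1) ^ m := pow_le_pow_right₀ (by linarith) (Finset.mem_range_succ_iff.1 hi)

lemma exists_abs_eval_sub_eval_le :
    ∃ K, 0 ≤ K ∧ ∀ x y, 0 ≤ x → x ≤ y →
      |p.eval y - p.eval x| ≤ K * (y + 1) ^ (p.natDegree - 1) * (y - x) := by
  obtain ⟨K, hK, hderiv⟩ := exists_abs_eval_le p.derivative p.natDegree_derivative_le
  refine ⟨K, hK, fun x y hx hxy ↦ ?_⟩
  have hbound : ∀ t ∈ Icc x y, ‖p.derivative.eval t‖ ≤ K * (y + 1) ^ (p.natDegree - 1) := by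
    intro t ht
    have ht0 : 0 ≤ t := hx.trans ht.1
    refine (hderiv t ht0).trans ?_
    gcongr
    exact ht.2
  simpa [Real.norm_eq_abs, abs_of_nonneg (sub_nonneg.2 hxy)] using
    (convex_Icc x y).norm_image_sub_le_of_norm_hasDerivWithin_le
      (fun t _ ↦ (p.hasDerivAt t).hasDerivWithinAt) hbound
      (left_mem_Icc.2 hxy) (right_mem_Icc.2 hxy)

lemma exists_abs_eval_sub_leadingCoeff_mul_le :
    ∃ K, ∀ x, 0 ≤ x →
      |p.eval x - p.leadingCoeff * (x + 1) ^ p.natDegree| ≤ K * (x + 1) ^ (p.natDegree - 1) := by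
  let r := p - C p.leadingCoeff * (X + C 1) ^ p.natDegree
  have hr : r.natDegree ≤ p.natDegree - 1 := by
    refine natDegree_le_pred ((natDegree_sub_le _ _).trans (max_le le_rfl ?_)) ?_
    · exact (natDegree_C_mul_le _ _).trans (natDegree_pow_X_add_C _ 1).le
    · have hcoeff : ((X + C 1 : ℝ[X]) ^ p.natDegree).coeff p.natDegree = 1 := by
        simpa only [leadingCoeff, natDegree_pow_X_add_C] using
          leadingCoeff_pow_X_add_C (1 : ℝ) p.natDegree
      rw [coeff_sub, coeff_C_mul, hcoeff, mul_one, leadingCoeff, sub_self]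
  obtain ⟨K, -, hK⟩ := exists_abs_eval_le r hr
  exact ⟨K, by simpa [r] using hK⟩

variable {p} (hp : ∀ x, 0 ≤ x → 0 < p.eval x)

include hp

lemma ne_zero_of_eval_pos : p ≠ 0 := by
  rintro rfl
  simpa using hp 0 le_rfl

lemma tendsto_pow_div_eval :
    Tendsto (fun x ↦ (x + 1) ^ p.natDegree / p.eval x) atTop (𝓝 p.leadingCoeff⁻¹) := by
  have hdeg : ((X + C 1 : ℝ[X]) ^ p.natDegree).degree = p.degree := by
    rw [degree_pow, degree_X_add_C, nsmul_one, degree_eq_natDegree (ne_zero_of_eval_pos hp)]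
  simpa [show (X + 1 : ℝ[X]).leadingCoeff = 1 from leadingCoeff_X_add_C 1] using
    div_tendsto_atTop_leadingCoeff_div_of_degree_eq _ _ hdeg

lemma exists_mul_pow_le_eval :
    ∃ κ, 0 < κ ∧ κ ≤ 1 ∧ ∀ x, 0 ≤ x → κ * (x + 1) ^ p.natDegree ≤ p.eval x := by
  set f : ℝ → ℝ := fun x ↦ (x + 1) ^ p.natDegree / p.eval x
  obtain ⟨X₀, hX₀⟩ := eventually_atTop.1
    ((tendsto_pow_div_eval hp).eventually_le_const (lt_add_one p.leadingCoeff⁻¹))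
  have hcont : ContinuousOn f (Icc 0 X₀) :=
    ContinuousOn.div (by fun_prop) p.continuousOn fun x hx ↦ (hp x hx.1).ne'
  obtain ⟨M, hM⟩ := isCompact_Icc.exists_bound_of_continuousOn hcont
  set N := max 1 (max M (p.leadingCoeff⁻¹ + 1))
  have hf : ∀ x, 0 ≤ x → f x ≤ N := fun x hx ↦ by
    rcases le_total x X₀ with h | h
    · exact (le_abs_self _).trans ((hM x ⟨hx, h⟩).trans (by simp [N]))
    · exact (hX₀ x h).trans (by simp [N])
  have hN : 1 ≤ N := le_max_left _ _
  refine ⟨N⁻¹, by positivity, inv_le_one_of_one_le₀ hN, fun x hx ↦ ?_⟩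
  rw [inv_mul_le_iff₀ (by positivity), ← div_le_iff₀ (hp x hx)]
  exact hf x hx

lemma leadingCoeff_pos_of_eval_pos : 0 < p.leadingCoeff := by
  have hlc : 0 ≤ p.leadingCoeff⁻¹ := by
    refine ge_of_tendsto (tendsto_pow_div_eval hp) ?_
    filter_upwards [eventually_ge_atTop 0] with x hx
    exact div_nonneg (by positivity) (hp x hx).le
  exact (inv_nonneg.1 hlc).lt_of_ne' (leadingCoeff_ne_zero.2 (ne_zero_of_eval_pos hp))

lemma le_leadingCoeff_of_mul_pow_le_eval {κ : ℝ} (hκ : 0 < κ)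
    (hle : ∀ x, 0 ≤ x → κ * (x + 1) ^ p.natDegree ≤ p.eval x) : κ ≤ p.leadingCoeff := by
  refine (inv_le_inv₀ (leadingCoeff_pos_of_eval_pos hp) hκ).1 ?_
  refine le_of_tendsto (tendsto_pow_div_eval hp) ?_
  filter_upwards [eventually_ge_atTop 0] with x hx
  rw [div_le_iff₀ (hp x hx), le_inv_mul_iff₀ hκ]
  exact hle x hx

end Polynomial

section Defect

lemma norm_cpow_neg_sub_cpow_neg_le {s : ℂ} {A B L : ℝ} (hL : 0 < L) (hA : L ≤ A) (hB : L ≤ B)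
    (hs : -1 ≤ s.re) :
    ‖(A : ℂ) ^ (-s) - (B : ℂ) ^ (-s)‖ ≤ ‖s‖ * L ^ (-s.re - 1) * |A - B| := by
  have hderiv : ∀ t ∈ Ici L, HasDerivWithinAt (fun t : ℝ ↦ (t : ℂ) ^ (-s))
      (-s * (t : ℂ) ^ (-s - 1)) (Ici L) t := fun t ht ↦ by
    have h := (hasDerivAt_id (t : ℂ)).cpow_const (c := -s)
      (Or.inl (by simpa using hL.trans_le ht))
    exact (by simpa using h : HasDerivAt (fun z : ℂ ↦ z ^ (-s)) (-s * (t : ℂ) ^ (-s - 1))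
      t).comp_ofReal.hasDerivWithinAt
  have hbound : ∀ t ∈ Ici L, ‖-s * (t : ℂ) ^ (-s - 1)‖ ≤ ‖s‖ * L ^ (-s.re - 1) := by
    intro t ht
    rw [norm_mul, norm_neg, Complex.norm_cpow_eq_rpow_re_of_pos (hL.trans_le ht)]
    gcongr
    simpa using Real.rpow_le_rpow_of_nonpos hL ht (by linarith)
  simpa [Real.norm_eq_abs] using
    (convex_Ici L).norm_image_sub_le_of_norm_hasDerivWithin_le hderiv hbound hB hA

/-- Two measurable functions on `(0, ∞)` that are at least `κ (x + 1) ^ d` and differ by at most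
`K (x + 1) ^ (d - 1)`; these are the bounds under which the difference of their `-s`-th powers is
integrable for `0 < re s`. -/
structure CloseAtDegree (d : ℕ) (κ K : ℝ) (a b : ℝ → ℝ) : Prop where
  measurable_left : Measurable a
  measurable_right : Measurable b
  degree_pos : 0 < d
  const_pos : 0 < κ
  const_le_one : κ ≤ 1
  le_left : ∀ x, 0 < x → κ * (x + 1) ^ d ≤ a x
  le_right : ∀ x, 0 < x → κ * (x + 1) ^ d ≤ b x
  abs_sub_le : ∀ x, 0 < x → |a x - b x| ≤ K * (x + 1) ^ (d - 1)

/-- The integral over `(0, ∞)` of the difference of the `-s`-th powers of `a` and `b`. -/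
noncomputable def defect (a b : ℝ → ℝ) (s : ℂ) : ℂ :=
  ∫ x in Ioi 0, ((a x : ℂ) ^ (-s) - (b x : ℂ) ^ (-s))

/-- An integrable function bounding, up to the factor `K`, the integrands of `defect a b s` for
all `s` in `truncatedHalfPlane σ M`, when `CloseAtDegree d κ K a b`. -/
noncomputable def defectMajorant (d : ℕ) (κ σ M x : ℝ) : ℝ :=
  M * κ ^ (-M - 1) * (x + 1) ^ (-(d * σ) - 1)

lemma integrableOn_defectMajorant {d : ℕ} (hd : 0 < d) (κ M : ℝ) {σ : ℝ} (hσ : 0 < σ) :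
    IntegrableOn (defectMajorant d κ σ M) (Ioi 0) := by
  have : 0 < d * σ := by positivity
  exact (integrableOn_add_rpow_Ioi_of_lt (by linarith) (by norm_num)).const_mul _

namespace CloseAtDegree

variable {d : ℕ} {κ K : ℝ} {a b : ℝ → ℝ} (h : CloseAtDegree d κ K a b)

include h

lemma left_pos {x : ℝ} (hx : 0 < x) : 0 < a x :=
  (mul_pos h.const_pos (by positivity)).trans_le (h.le_left x hx)

lemma right_pos {x : ℝ} (hx : 0 < x) : 0 < b x :=
  (mul_pos h.const_pos (by positivity)).trans_le (h.le_right x hx)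

lemma norm_cpow_sub_le {σ M : ℝ} (hσ : 0 < σ) {s : ℂ} (hs : s ∈ truncatedHalfPlane σ M) {x : ℝ}
    (hx : 0 < x) :
    ‖(a x : ℂ) ^ (-s) - (b x : ℂ) ^ (-s)‖ ≤ K * defectMajorant d κ σ M x := by
  have hσs : σ ≤ s.re := hs.1.le
  have hsM : ‖s‖ ≤ M := hs.2.le
  have hre : s.re ≤ M := (Complex.re_le_norm s).trans hsM
  have hM : 0 ≤ M := (norm_nonneg s).trans hsM
  have hκ := h.const_pos
  have hx1 : 0 < x + 1 := by positivity
  have hK : 0 ≤ K := nonneg_of_mul_nonneg_left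
    ((abs_nonneg _).trans (h.abs_sub_le x hx)) (by positivity)
  have hκ_rpow : κ ^ (-s.re - 1) ≤ κ ^ (-M - 1) :=
    Real.rpow_le_rpow_of_exponent_ge hκ h.const_le_one (by linarith)
  have hexp : (d : ℝ) * (-s.re - 1) + (d - 1 : ℕ) = -(d * s.re) - 1 := by
    rw [Nat.cast_pred h.degree_pos]
    ring
  calc ‖(a x : ℂ) ^ (-s) - (b x : ℂ) ^ (-s)‖
      ≤ ‖s‖ * (κ * (x + 1) ^ d) ^ (-s.re - 1) * |a x - b x| :=
        norm_cpow_neg_sub_cpow_neg_le (by positivity) (h.le_left x hx) (h.le_right x hx)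
          (by linarith)
    _ ≤ ‖s‖ * (κ * (x + 1) ^ d) ^ (-s.re - 1) * (K * (x + 1) ^ (d - 1)) := by
        gcongr
        exact h.abs_sub_le x hx
    _ = K * (‖s‖ * κ ^ (-s.re - 1) * (x + 1) ^ (-(d * s.re) - 1)) := by
        rw [Real.mul_rpow hκ.le (by positivity), ← Real.rpow_natCast_mul hx1.le, ← hexp,
          Real.rpow_add hx1, Real.rpow_natCast]
        ring
    _ ≤ K * defectMajorant d κ σ M x := by
        unfold defectMajorant
        gcongr
        linarith

lemma measurable_cpow_sub (s : ℂ) : Measurable fun x ↦ (a x : ℂ) ^ (-s) - (b x : ℂ) ^ (-s) :=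
  ((Complex.measurable_ofReal.comp h.measurable_left).pow_const _).sub
    ((Complex.measurable_ofReal.comp h.measurable_right).pow_const _)

lemma integrableOn_cpow_sub {s : ℂ} (hs : 0 < s.re) :
    IntegrableOn (fun x ↦ (a x : ℂ) ^ (-s) - (b x : ℂ) ^ (-s)) (Ioi 0) := by
  have hs_mem : s ∈ truncatedHalfPlane (s.re / 2) (‖s‖ + 1) := ⟨half_lt_self hs, lt_add_one _⟩
  refine Integrable.mono' ((integrableOn_defectMajorant h.degree_pos κ (‖s‖ + 1)
    (half_pos hs)).const_mul K) (h.measurable_cpow_sub s).aestronglyMeasurable ?_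
  filter_upwards [ae_restrict_mem measurableSet_Ioi] with x hx
  exact h.norm_cpow_sub_le (half_pos hs) hs_mem hx

lemma integrableOn_left_cpow {s : ℂ} (hs : 0 < s.re)
    (hb : IntegrableOn (fun x ↦ (b x : ℂ) ^ (-s)) (Ioi 0)) :
    IntegrableOn (fun x ↦ (a x : ℂ) ^ (-s)) (Ioi 0) := by
  simpa only [Pi.add_def, sub_add_cancel] using (h.integrableOn_cpow_sub hs).add hb

lemma integral_left_cpow {s : ℂ} (hs : 0 < s.re)
    (hb : IntegrableOn (fun x ↦ (b x : ℂ) ^ (-s)) (Ioi 0)) :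
    ∫ x in Ioi 0, (a x : ℂ) ^ (-s) = defect a b s + ∫ x in Ioi 0, (b x : ℂ) ^ (-s) := by
  rw [defect, ← integral_add (h.integrableOn_cpow_sub hs) hb]
  simp only [sub_add_cancel]

lemma norm_defect_le {σ M : ℝ} (hσ : 0 < σ) {s : ℂ} (hs : s ∈ truncatedHalfPlane σ M) :
    ‖defect a b s‖ ≤ K * ∫ x in Ioi 0, defectMajorant d κ σ M x := by
  rw [← integral_const_mul]
  refine norm_integral_le_of_norm_le
    ((integrableOn_defectMajorant h.degree_pos κ M hσ).const_mul K) ?_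
  filter_upwards [ae_restrict_mem measurableSet_Ioi] with x hx using h.norm_cpow_sub_le hσ hs hx

lemma differentiableOn_defect : DifferentiableOn ℂ (defect a b) {s | 0 < s.re} := by
  refine differentiableOn_re_gt_of_truncatedHalfPlane fun σ M hσ ↦
    differentiableOn_integral_of_norm_le (isOpen_truncatedHalfPlane σ M)
      (fun s _ ↦ (h.measurable_cpow_sub s).aestronglyMeasurable) ?_
      ((integrableOn_defectMajorant h.degree_pos κ M hσ).const_mul K) ?_
  · filter_upwards [ae_restrict_mem measurableSet_Ioi] with x hx
    have ha : (a x : ℂ) ≠ 0 := Complex.ofReal_ne_zero.2 (h.left_pos hx).ne'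
    have hb : (b x : ℂ) ≠ 0 := Complex.ofReal_ne_zero.2 (h.right_pos hx).ne'
    exact ((differentiable_neg.const_cpow (.inl ha)).sub
      (differentiable_neg.const_cpow (.inl hb))).differentiableOn
  · filter_upwards [ae_restrict_mem measurableSet_Ioi] with x hx s hs
    exact h.norm_cpow_sub_le hσ hs hx

end CloseAtDegree

end Defect

section RiemannSum

lemma ofReal_mul_pow_cpow_neg {A t : ℝ} (hA : 0 ≤ A) (ht : 0 ≤ t) (d : ℕ) (s : ℂ) :
    ((A * t ^ d : ℝ) : ℂ) ^ (-s) = (A : ℂ) ^ (-s) * (t : ℂ) ^ (-(d * s)) := by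
  rw [Complex.ofReal_mul, Complex.mul_cpow_ofReal_nonneg hA (by positivity), Complex.ofReal_pow,
    ← mul_neg, Complex.cpow_nat_mul'] <;> simp [Complex.arg_ofReal_of_nonneg ht, Real.pi_pos,
    Real.pi_pos.le]

lemma hasSum_integral_comp_ceil {E : Type*} [NormedAddCommGroup E] [NormedSpace ℝ E]
    [CompleteSpace E] {f : ℕ → E} (hf : IntegrableOn (fun x : ℝ ↦ f ⌈x⌉₊) (Ioi 0)) :
    HasSum (fun k ↦ f (k + 1)) (∫ x in Ioi (0 : ℝ), f ⌈x⌉₊) := by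
  have hunion : ⋃ k : ℕ, Ioc (k : ℝ) (k + 1 : ℕ) = Ioi 0 := by
    simpa using iUnion_Ioc_map_succ_eq_Ioi (f := fun k : ℕ ↦ (k : ℝ)) (fun k ↦ by simp)
      (not_bddAbove_of_tendsto_atTop tendsto_natCast_atTop_atTop)
  have hterm (k : ℕ) : ∫ x in Ioc (k : ℝ) (k + 1 : ℕ), f ⌈x⌉₊ = f (k + 1) := by
    rw [setIntegral_congr_fun (g := fun _ ↦ f (k + 1)) measurableSet_Ioc fun x hx ↦ ?_]
    · simp
    · rw [(Nat.ceil_eq_iff k.succ_ne_zero).2 (by simpa using hx)]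
  rw [← hunion] at hf ⊢
  simpa only [hterm] using hasSum_integral_iUnion (s := fun k : ℕ ↦ Ioc (k : ℝ) (k + 1 : ℕ))
    (fun _ ↦ measurableSet_Ioc) (Nat.mono_cast (α := ℝ)).pairwise_disjoint_on_Ioc_succ hf

lemma integrableOn_Ioi_comp_add_iff {E : Type*} [NormedAddCommGroup E] (f : ℝ → E) (a c : ℝ) :
    IntegrableOn (fun x ↦ f (x + c)) (Ioi a) ↔ IntegrableOn f (Ioi (a + c)) := by
  simpa [Function.comp_def] using
    (measurePreserving_add_right volume c).integrableOn_comp_preimage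
      (MeasurableEquiv.addRight c).measurableEmbedding (f := f) (s := Ioi (a + c))

lemma integral_Ioi_comp_add {E : Type*} [NormedAddCommGroup E] [NormedSpace ℝ E] (f : ℝ → E)
    (a c : ℝ) : ∫ x in Ioi a, f (x + c) = ∫ x in Ioi (a + c), f x := by
  simpa using (measurePreserving_add_right volume c).setIntegral_preimage_emb
    (MeasurableEquiv.addRight c).measurableEmbedding f (Ioi (a + c))

section Model

variable {B : ℝ} {d : ℕ} {s : ℂ}

lemma integrableOn_mul_add_one_pow_cpow_neg (hB : 0 ≤ B) (hs : 1 < d * s.re) :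
    IntegrableOn (fun x : ℝ ↦ ((B * (x + 1) ^ d : ℝ) : ℂ) ^ (-s)) (Ioi 0) := by
  have hcpow : IntegrableOn (fun x : ℝ ↦ ((x + 1 : ℝ) : ℂ) ^ (-(d * s))) (Ioi 0) := by
    rw [integrableOn_Ioi_comp_add_iff (fun x : ℝ ↦ (x : ℂ) ^ (-(d * s)))]
    exact integrableOn_Ioi_cpow_of_lt (by simpa using hs) (by norm_num)
  exact IntegrableOn.congr_fun (hcpow.const_mul ((B : ℂ) ^ (-s))) (fun x (hx : 0 < x) ↦
    (ofReal_mul_pow_cpow_neg hB (by positivity) d s).symm) measurableSet_Ioi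

lemma integral_mul_add_one_pow_cpow_neg (hB : 0 ≤ B) (hs : 1 < d * s.re) :
    ∫ x in Ioi (0 : ℝ), ((B * (x + 1) ^ d : ℝ) : ℂ) ^ (-s) = (B : ℂ) ^ (-s) / (d * s - 1) := by
  calc ∫ x in Ioi (0 : ℝ), ((B * (x + 1) ^ d : ℝ) : ℂ) ^ (-s)
      = ∫ x in Ioi (0 : ℝ), (B : ℂ) ^ (-s) * ((x + 1 : ℝ) : ℂ) ^ (-(d * s)) :=
        setIntegral_congr_fun measurableSet_Ioi fun x (hx : 0 < x) ↦
          ofReal_mul_pow_cpow_neg hB (by positivity) d s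
    _ = (B : ℂ) ^ (-s) * ∫ x in Ioi (1 : ℝ), (x : ℂ) ^ (-(d * s)) := by
        rw [integral_const_mul, integral_Ioi_comp_add (fun x : ℝ ↦ (x : ℂ) ^ (-(d * s))), zero_add]
    _ = (B : ℂ) ^ (-s) / (d * s - 1) := by
        rw [integral_Ioi_cpow_of_lt (by simpa using hs) one_pos, Complex.ofReal_one,
          Complex.one_cpow, neg_add_eq_sub, ← neg_sub (d * s) 1, neg_div_neg_eq, mul_one_div]

end Model

/-- `p` sampled on the grid of mesh `1 / n`, at the right end of the cell containing `x`. -/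
noncomputable def stepEval (p : ℝ[X]) (n : ℕ) (x : ℝ) : ℝ := p.eval (⌈n * x⌉₊ / n)

/-- The error made when a Riemann sum of `p ^ (-s)` of mesh `1 / n` is replaced by its integral. -/
noncomputable def riemannSumDefect (p : ℝ[X]) (n : ℕ) : ℂ → ℂ := defect (stepEval p n) p.eval

/-- The error made when `p` is replaced by its leading term, centred at `-1`, in the integral of
`p ^ (-s)`. -/
noncomputable def leadingTermDefect (p : ℝ[X]) : ℂ → ℂ :=
  defect p.eval fun x ↦ p.leadingCoeff * (x + 1) ^ p.natDegree

variable {p : ℝ[X]} (hp : ∀ x, 0 ≤ x → 0 < p.eval x) (hd : 0 < p.natDegree)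

include hp hd

lemma exists_closeAtDegree_stepEval :
    ∃ κ K, ∀ n : ℕ, 0 < n → CloseAtDegree p.natDegree κ (K / n) (stepEval p n) p.eval := by
  obtain ⟨κ, hκ, hκ_one, hκ_le⟩ := exists_mul_pow_le_eval hp
  obtain ⟨K, hK, hK_le⟩ := exists_abs_eval_sub_eval_le p
  refine ⟨κ, K * 2 ^ (p.natDegree - 1), fun n hn ↦ ?_⟩
  have le_ceil {x : ℝ} : x ≤ ⌈n * x⌉₊ / n := by
    rw [le_div_iff₀' (by positivity)]
    exact Nat.le_ceil _
  have ceil_sub_le {x : ℝ} (hx : 0 < x) : ⌈n * x⌉₊ / n - x ≤ 1 / (n : ℝ) := by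
    rw [sub_le_iff_le_add, div_le_iff₀ (by positivity), add_mul, one_div_mul_cancel (by positivity)]
    linarith [Nat.ceil_lt_add_one (a := n * x) (by positivity)]
  have one_div_le : 1 / (n : ℝ) ≤ 1 := by
    simpa using Nat.cast_inv_le_one n
  refine ⟨p.continuous.measurable.comp (by fun_prop), p.continuous.measurable, hd, hκ, hκ_one,
    fun x hx ↦ ?_, fun x hx ↦ hκ_le x hx.le, fun x hx ↦ ?_⟩
  · calc κ * (x + 1) ^ p.natDegree ≤ κ * (⌈n * x⌉₊ / n + 1) ^ p.natDegree := by
          gcongr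
          exact le_ceil
      _ ≤ stepEval p n x := hκ_le _ (by positivity)
  · calc |stepEval p n x - p.eval x|
        ≤ K * (⌈n * x⌉₊ / n + 1) ^ (p.natDegree - 1) * (⌈n * x⌉₊ / n - x) := hK_le x _ hx.le le_ceil
      _ ≤ K * (2 * (x + 1)) ^ (p.natDegree - 1) * (1 / n) := by
          gcongr
          · linarith [le_ceil (x := x)]
          · linarith [ceil_sub_le hx]
          · exact ceil_sub_le hx
      _ = K * 2 ^ (p.natDegree - 1) / n * (x + 1) ^ (p.natDegree - 1) := by
          rw [mul_pow]
          ring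

lemma exists_closeAtDegree_leadingTerm :
    ∃ κ K, CloseAtDegree p.natDegree κ K p.eval
      fun x ↦ p.leadingCoeff * (x + 1) ^ p.natDegree := by
  obtain ⟨κ, hκ, hκ_one, hκ_le⟩ := exists_mul_pow_le_eval hp
  obtain ⟨K, hK_le⟩ := exists_abs_eval_sub_leadingCoeff_mul_le p
  refine ⟨κ, K, p.continuous.measurable, by fun_prop, hd, hκ, hκ_one, fun x hx ↦ hκ_le x hx.le,
    fun x hx ↦ ?_, fun x hx ↦ hK_le x hx.le⟩
  gcongr
  exact le_leadingCoeff_of_mul_pow_le_eval hp hκ hκ_le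

variable {s : ℂ} (hs : 1 < p.natDegree * s.re)

include hs

lemma integrableOn_eval_cpow_neg : IntegrableOn (fun x ↦ ((p.eval x : ℝ) : ℂ) ^ (-s)) (Ioi 0) := by
  obtain ⟨κ, K, hclose⟩ := exists_closeAtDegree_leadingTerm hp hd
  exact hclose.integrableOn_left_cpow (pos_of_mul_pos_right (one_pos.trans hs) (Nat.cast_nonneg _))
    (integrableOn_mul_add_one_pow_cpow_neg (leadingCoeff_pos_of_eval_pos hp).le hs)

lemma integral_eval_cpow_neg :
    ∫ x in Ioi 0, ((p.eval x : ℝ) : ℂ) ^ (-s) =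
      leadingTermDefect p s + (p.leadingCoeff : ℂ) ^ (-s) / (p.natDegree * s - 1) := by
  obtain ⟨κ, K, hclose⟩ := exists_closeAtDegree_leadingTerm hp hd
  have hlc := (leadingCoeff_pos_of_eval_pos hp).le
  rw [hclose.integral_left_cpow (pos_of_mul_pos_right (one_pos.trans hs) (Nat.cast_nonneg _))
    (integrableOn_mul_add_one_pow_cpow_neg hlc hs), integral_mul_add_one_pow_cpow_neg hlc hs,
    leadingTermDefect]

lemma hasSum_eval_div_cpow_neg {n : ℕ} (hn : 0 < n) :
    HasSum (fun k : ℕ ↦ ((p.eval ((k + 1) / n) : ℝ) : ℂ) ^ (-s)) (n * (riemannSumDefect p n s +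
      (leadingTermDefect p s + (p.leadingCoeff : ℂ) ^ (-s) / (p.natDegree * s - 1)))) := by
  obtain ⟨κ, K, hclose⟩ := exists_closeAtDegree_stepEval hp hd
  have hn' : (0 : ℝ) < n := Nat.cast_pos.2 hn
  have hs_pos : 0 < s.re := pos_of_mul_pos_right (one_pos.trans hs) (Nat.cast_nonneg _)
  have heval := integrableOn_eval_cpow_neg hp hd hs
  let f : ℕ → ℂ := fun k ↦ ((p.eval (k / n) : ℝ) : ℂ) ^ (-s)
  have hceil : IntegrableOn (fun x : ℝ ↦ f ⌈x⌉₊) (Ioi 0) := by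
    simpa using (integrableOn_Ioi_comp_mul_left_iff (fun x : ℝ ↦ f ⌈x⌉₊) 0 hn').1
      ((hclose n hn).integrableOn_left_cpow hs_pos heval)
  have integral_ceil : ∫ x in Ioi (0 : ℝ), f ⌈x⌉₊ = n * (riemannSumDefect p n s +
      (leadingTermDefect p s + (p.leadingCoeff : ℂ) ^ (-s) / (p.natDegree * s - 1))) := by
    calc ∫ x in Ioi (0 : ℝ), f ⌈x⌉₊ = n * ∫ x in Ioi 0, (stepEval p n x : ℂ) ^ (-s) := by
          simpa [f, stepEval] using
            (integral_comp_mul_left_Ioi' (fun x : ℝ ↦ f ⌈x⌉₊) 0 hn').symm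
      _ = _ := by
          rw [(hclose n hn).integral_left_cpow hs_pos heval, integral_eval_cpow_neg hp hd hs,
            riemannSumDefect]
  simpa [f, integral_ceil] using hasSum_integral_comp_ceil hceil

end RiemannSum

section Continuation

lemma summable_natCast_add_one_rpow {a : ℝ} (ha : a < -1) :
    Summable fun n : ℕ ↦ ((n : ℝ) + 1) ^ a := by
  simpa using (summable_nat_add_iff 1).2 (Real.summable_nat_rpow.2 ha)

lemma hasSum_natCast_add_one_cpow_neg {w : ℂ} (hw : 1 < w.re) :
    HasSum (fun n : ℕ ↦ ((n : ℂ) + 1) ^ (-w)) (riemannZeta w) := by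
  have hsum : Summable fun n : ℕ ↦ ((n : ℂ) + 1) ^ (-w) := by
    simpa [Complex.cpow_neg] using
      (summable_nat_add_iff 1).2 (Complex.summable_one_div_nat_cpow.2 hw)
  rw [zeta_eq_tsum_one_div_nat_add_one_cpow hw]
  simpa [Complex.cpow_neg] using hsum.hasSum

lemma re_natCast_add_one_mul (d : ℕ) (s : ℂ) : (((d : ℂ) + 1) * s).re = (d + 1) * s.re := by
  simp

lemma mul_rpow_half_le {N K : ℝ} (hN : 0 < N) (hK : 0 < K) {d : ℕ} (hd : 0 < d) :
    (N * K) ^ (((d : ℝ) + 1) / 2) ≤ N * (N + K) ^ d := by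
  have hd' : (1 : ℝ) ≤ d := Nat.one_le_cast.2 hd
  calc (N * K) ^ (((d : ℝ) + 1) / 2)
      = N * (N ^ (((d : ℝ) - 1) / 2) * K ^ (((d : ℝ) + 1) / 2)) := by
        rw [Real.mul_rpow hN.le hK.le, show ((d : ℝ) + 1) / 2 = 1 + (d - 1) / 2 by ring,
          Real.rpow_add hN, Real.rpow_one, mul_assoc]
    _ ≤ N * ((N + K) ^ (((d : ℝ) - 1) / 2) * (N + K) ^ (((d : ℝ) + 1) / 2)) := by
        gcongr <;> linarith
    _ = N * (N + K) ^ d := by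
        rw [← Real.rpow_add (by positivity), ← Real.rpow_natCast]
        ring_nf

/-- The values `n ^ (d + 1) * p (k / n)` at positive integers `n = q.1 + 1`, `k = q.2 + 1` of the
binary form of degree `d + 1`, divisible by `n`, that is attached to the polynomial `p` of degree
`d`. -/
noncomputable def latticeForm (p : ℝ[X]) (q : ℕ × ℕ) : ℝ :=
  p.eval ((q.2 + 1) / (q.1 + 1) : ℝ) * ((q.1 : ℝ) + 1) ^ (p.natDegree + 1)

/-- The total contribution of the Riemann sum errors to `∑ q, latticeForm p q ^ (-s)`. -/
noncomputable def latticeDefect (p : ℝ[X]) (s : ℂ) : ℂ :=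
  ∑' n : ℕ, ((n : ℂ) + 1) ^ (-((p.natDegree + 1) * s - 1)) * riemannSumDefect p (n + 1) s

/-- The meromorphic continuation of `∑ q, latticeForm p q ^ (-s)` to `1 / (d + 1) < re s`, where
`d` is the degree of `p`. -/
noncomputable def latticeZeta (p : ℝ[X]) (s : ℂ) : ℂ :=
  latticeDefect p s + riemannZeta ((p.natDegree + 1) * s - 1) *
    (leadingTermDefect p s + (p.leadingCoeff : ℂ) ^ (-s) / (p.natDegree * s - 1))

variable {p : ℝ[X]}

lemma sub_one_div_mul_latticeZeta (hd : p.natDegree ≠ 0) {s : ℂ} (hs : s ≠ 1 / p.natDegree) :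
    (s - 1 / p.natDegree) * latticeZeta p s =
      (s - 1 / p.natDegree) * (latticeDefect p s +
        riemannZeta ((p.natDegree + 1) * s - 1) * leadingTermDefect p s) +
      riemannZeta ((p.natDegree + 1) * s - 1) * ((p.leadingCoeff : ℂ) ^ (-s) / p.natDegree) := by
  have hd' : (p.natDegree : ℂ) ≠ 0 := Nat.cast_ne_zero.2 hd
  have hs' : p.natDegree * s - 1 ≠ 0 := fun h ↦ hs <| by
    rw [eq_div_iff hd']
    linear_combination h
  have hquot (a : ℂ) :
      a / p.natDegree = (s - 1 / p.natDegree) * (a / (p.natDegree * s - 1)) := by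
    field_simp
  rw [hquot (_ ^ (-s)), latticeZeta]
  ring

variable (hp : ∀ x, 0 ≤ x → 0 < p.eval x)

include hp

lemma latticeForm_pos (q : ℕ × ℕ) : 0 < latticeForm p q :=
  mul_pos (hp _ (by positivity)) (by positivity)

lemma differentiableAt_leadingCoeff_cpow_neg (s : ℂ) :
    DifferentiableAt ℂ (fun s ↦ (p.leadingCoeff : ℂ) ^ (-s)) s :=
  differentiable_neg.differentiableAt.const_cpow
    (.inl (Complex.ofReal_ne_zero.2 (leadingCoeff_pos_of_eval_pos hp).ne'))

section Degree

variable (hd : 0 < p.natDegree)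

include hd

lemma exists_mul_rpow_le_latticeForm :
    ∃ κ, 0 < κ ∧ ∀ q : ℕ × ℕ,
      κ * (((q.1 : ℝ) + 1) * (q.2 + 1)) ^ (((p.natDegree : ℝ) + 1) / 2) ≤ latticeForm p q := by
  obtain ⟨κ, hκ, -, hκ_le⟩ := exists_mul_pow_le_eval hp
  refine ⟨κ, hκ, fun q ↦ ?_⟩
  calc κ * (((q.1 : ℝ) + 1) * (q.2 + 1)) ^ (((p.natDegree : ℝ) + 1) / 2)
      ≤ κ * ((q.1 + 1) * ((q.1 + 1) + (q.2 + 1)) ^ p.natDegree) := by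
        gcongr
        exact mul_rpow_half_le (by positivity) (by positivity) hd
    _ = κ * (((q.2 : ℝ) + 1) / (q.1 + 1) + 1) ^ p.natDegree * (q.1 + 1) ^ (p.natDegree + 1) := by
        rw [div_add_one (by positivity), div_pow]
        field_simp
        ring
    _ ≤ latticeForm p q := by
        unfold latticeForm
        gcongr
        exact hκ_le _ (by positivity)

lemma summable_latticeForm_cpow_neg {s : ℂ} (hs : 2 < (p.natDegree + 1) * s.re) :
    Summable fun q ↦ (latticeForm p q : ℂ) ^ (-s) := by
  obtain ⟨κ, hκ, hκ_le⟩ := exists_mul_rpow_le_latticeForm hp hd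
  have hs_pos : 0 < s.re := pos_of_mul_pos_right (two_pos.trans hs) (by positivity)
  set a : ℝ := -((p.natDegree + 1) / 2 * s.re)
  have hsum := summable_natCast_add_one_rpow (a := a) (by simp only [a]; linarith)
  refine .of_norm_bounded ((hsum.mul_of_nonneg hsum (fun _ ↦ by positivity)
    fun _ ↦ by positivity).mul_left (κ ^ (-s.re))) fun q ↦ ?_
  calc ‖(latticeForm p q : ℂ) ^ (-s)‖ = latticeForm p q ^ (-s.re) :=
        Complex.norm_cpow_eq_rpow_re_of_pos (latticeForm_pos hp q) _
    _ ≤ (κ * (((q.1 : ℝ) + 1) * (q.2 + 1)) ^ (((p.natDegree : ℝ) + 1) / 2)) ^ (-s.re) :=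
        Real.rpow_le_rpow_of_nonpos (by positivity) (hκ_le q) (neg_nonpos.2 hs_pos.le)
    _ = κ ^ (-s.re) * (((q.1 : ℝ) + 1) ^ a * ((q.2 : ℝ) + 1) ^ a) := by
        rw [Real.mul_rpow hκ.le (by positivity), ← Real.rpow_mul (by positivity), mul_neg,
          Real.mul_rpow (by positivity) (by positivity)]

lemma exists_norm_latticeDefect_term_le {σ : ℝ} (hσ : 0 < σ) (M : ℝ) :
    ∃ C, ∀ (n : ℕ), ∀ s ∈ truncatedHalfPlane σ M,
      ‖((n : ℂ) + 1) ^ (-((p.natDegree + 1) * s - 1)) * riemannSumDefect p (n + 1) s‖ ≤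
        C * ((n : ℝ) + 1) ^ (-((p.natDegree + 1) * σ)) := by
  obtain ⟨κ, K, hclose⟩ := exists_closeAtDegree_stepEval hp hd
  refine ⟨K * ∫ x in Ioi 0, defectMajorant p.natDegree κ σ M x, fun n s hs ↦ ?_⟩
  have hn : (0 : ℝ) < n + 1 := by positivity
  have hcpow : ‖((n : ℂ) + 1) ^ (-((p.natDegree + 1) * s - 1))‖ ≤
      ((n : ℝ) + 1) ^ (-((p.natDegree + 1) * σ) + 1) := by
    have := Complex.norm_cpow_eq_rpow_re_of_pos hn (-((p.natDegree + 1) * s - 1))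
    push_cast at this
    rw [this]
    refine Real.rpow_le_rpow_of_exponent_le (by simp) ?_
    rw [Complex.neg_re, Complex.sub_re, Complex.one_re, re_natCast_add_one_mul, neg_sub,
      sub_eq_neg_add]
    gcongr
    exact hs.1.le
  calc _ ≤ ((n : ℝ) + 1) ^ (-((p.natDegree + 1) * σ) + 1) *
        (K / (n + 1 : ℕ) * ∫ x in Ioi 0, defectMajorant p.natDegree κ σ M x) := by
        rw [norm_mul]
        exact mul_le_mul hcpow ((hclose (n + 1) n.succ_pos).norm_defect_le hσ hs)
          (norm_nonneg _) (by positivity)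
    _ = _ := by
        rw [Real.rpow_add_one hn.ne']
        push_cast
        field_simp

lemma summable_latticeDefect_term {s : ℂ} (hs : 1 < (p.natDegree + 1) * s.re) :
    Summable fun n : ℕ ↦
      ((n : ℂ) + 1) ^ (-((p.natDegree + 1) * s - 1)) * riemannSumDefect p (n + 1) s := by
  obtain ⟨σ, hσ, hσs⟩ := exists_between (show 1 / ((p.natDegree : ℝ) + 1) < s.re by
    rwa [div_lt_iff₀' (by positivity)])
  obtain ⟨C, hC⟩ := exists_norm_latticeDefect_term_le hp hd
    ((by positivity : (0 : ℝ) < 1 / (p.natDegree + 1)).trans hσ) (‖s‖ + 1)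
  refine .of_norm_bounded ((summable_natCast_add_one_rpow ?_).mul_left C)
    fun n ↦ hC n s ⟨hσs, lt_add_one _⟩
  rw [div_lt_iff₀' (by positivity)] at hσ
  linarith

lemma differentiableAt_latticeDefect {s : ℂ} (hs : 1 / ((p.natDegree : ℝ) + 1) < s.re) :
    DifferentiableAt ℂ (latticeDefect p) s := by
  refine (differentiableOn_re_gt_of_truncatedHalfPlane fun σ M hσ ↦ ?_).differentiableAt
    ((isOpen_lt continuous_const Complex.continuous_re).mem_nhds hs)
  have hσ_pos : 0 < σ := (by positivity : (0 : ℝ) < 1 / (p.natDegree + 1)).trans hσ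
  obtain ⟨C, hC⟩ := exists_norm_latticeDefect_term_le hp hd hσ_pos M
  obtain ⟨κ, K, hclose⟩ := exists_closeAtDegree_stepEval hp hd
  refine Complex.differentiableOn_tsum_of_summable_norm
    ((summable_natCast_add_one_rpow ?_).mul_left C) (fun n ↦ ?_) (isOpen_truncatedHalfPlane σ M) hC
  · rw [div_lt_iff₀' (by positivity)] at hσ
    linarith
  · refine DifferentiableOn.mul ?_ ((hclose (n + 1) n.succ_pos).differentiableOn_defect.mono
      fun s hs ↦ hσ_pos.trans hs.1)
    exact (Differentiable.const_cpow (by fun_prop)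
      (.inl (Nat.cast_add_one_ne_zero n))).differentiableOn

lemma hasSum_latticeForm_cpow_neg {s : ℂ} (hs : 2 < (p.natDegree + 1) * s.re) :
    HasSum (fun q ↦ (latticeForm p q : ℂ) ^ (-s)) (latticeZeta p s) := by
  have hds : 1 < p.natDegree * s.re := by
    have : (1 : ℝ) ≤ p.natDegree := Nat.one_le_cast.2 hd
    nlinarith
  set P := leadingTermDefect p s + (p.leadingCoeff : ℂ) ^ (-s) / (p.natDegree * s - 1)
  have hinner (n : ℕ) : HasSum (fun k ↦ (latticeForm p (n, k) : ℂ) ^ (-s))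
      (((n : ℂ) + 1) ^ (-((p.natDegree + 1) * s - 1)) * riemannSumDefect p (n + 1) s +
        ((n : ℂ) + 1) ^ (-((p.natDegree + 1) * s - 1)) * P) := by
    have hform (k : ℕ) : (latticeForm p (n, k) : ℂ) ^ (-s) =
        ((p.eval ((k + 1) / (n + 1 : ℕ)) : ℝ) : ℂ) ^ (-s) *
          ((n : ℂ) + 1) ^ (-((p.natDegree + 1) * s)) := by
      simpa [latticeForm] using ofReal_mul_pow_cpow_neg (t := (n : ℝ) + 1)
        (hp (((k : ℝ) + 1) / (n + 1)) (by positivity)).le (by positivity) (p.natDegree + 1) s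
    have hpow : ((n : ℂ) + 1) ^ (-((p.natDegree + 1) * s - 1)) =
        (n + 1 : ℕ) * ((n : ℂ) + 1) ^ (-((p.natDegree + 1) * s)) := by
      rw [neg_sub, sub_eq_add_neg, Complex.cpow_add _ _ (Nat.cast_add_one_ne_zero n),
        Complex.cpow_one, Nat.cast_succ]
    rw [← mul_add, hpow, mul_right_comm]
    simpa only [hform] using (hasSum_eval_div_cpow_neg hp hd hds n.succ_pos).mul_right
      (((n : ℂ) + 1) ^ (-((p.natDegree + 1) * s)))
  have houter := (summable_latticeDefect_term hp hd (by linarith)).hasSum.add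
    ((hasSum_natCast_add_one_cpow_neg (w := (p.natDegree + 1) * s - 1) ?_).mul_right P)
  · have hsum := (summable_latticeForm_cpow_neg hp hd hs).hasSum
    rwa [(hsum.prod_fiberwise hinner).unique houter] at hsum
  · rw [Complex.sub_re, Complex.one_re, re_natCast_add_one_mul]
    linarith

lemma differentiableAt_leadingTermDefect {s : ℂ} (hs : 0 < s.re) :
    DifferentiableAt ℂ (leadingTermDefect p) s := by
  obtain ⟨κ, K, hclose⟩ := exists_closeAtDegree_leadingTerm hp hd
  exact hclose.differentiableOn_defect.differentiableAt
    ((isOpen_lt continuous_const Complex.continuous_re).mem_nhds hs)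

lemma differentiableOn_latticeZeta :
    DifferentiableOn ℂ (latticeZeta p) ({s | 1 / ((p.natDegree : ℝ) + 1) < s.re} \
      {2 / ((p.natDegree : ℂ) + 1), 1 / (p.natDegree : ℂ)}) := by
  rintro s ⟨hs, hs_ne⟩
  have hs_ne_two_div : (p.natDegree + 1) * s - 1 ≠ 1 := fun h ↦ hs_ne <| .inl <| by
    rw [eq_div_iff (Nat.cast_add_one_ne_zero _)]
    linear_combination h
  have hs_ne_one_div : p.natDegree * s - 1 ≠ 0 := fun h ↦ hs_ne <| .inr <| by
    rw [mem_singleton_iff, eq_div_iff (Nat.cast_ne_zero.2 hd.ne')]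
    linear_combination h
  have hs_pos : 0 < s.re := (by positivity : (0 : ℝ) < 1 / (p.natDegree + 1)).trans hs
  exact ((differentiableAt_latticeDefect hp hd hs).add
    (((differentiableAt_riemannZeta hs_ne_two_div).comp s (by fun_prop)).mul
      ((differentiableAt_leadingTermDefect hp hd hs_pos).add
        ((differentiableAt_leadingCoeff_cpow_neg hp s).div (by fun_prop)
          hs_ne_one_div)))).differentiableWithinAt

end Degree

lemma tendsto_sub_mul_latticeZeta (hd : 2 ≤ p.natDegree) :
    Tendsto (fun s ↦ (s - 1 / p.natDegree) * latticeZeta p s) (𝓝[≠] (1 / p.natDegree))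
      (𝓝 (riemannZeta (1 / p.natDegree) *
        ((p.leadingCoeff : ℂ) ^ (-(1 / p.natDegree) : ℂ) / p.natDegree))) := by
  set s₀ : ℂ := 1 / p.natDegree
  have hd0 : (p.natDegree : ℂ) ≠ 0 := Nat.cast_ne_zero.2 (by omega)
  have hs₀ : s₀ = ((1 / p.natDegree : ℝ) : ℂ) := by simp [s₀]
  have hs₀_re : 1 / ((p.natDegree : ℝ) + 1) < s₀.re := by
    rw [hs₀, Complex.ofReal_re]
    gcongr
    exact lt_add_one _
  have hζ_arg : (p.natDegree + 1) * s₀ - 1 = s₀ := by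
    simp only [s₀]
    field_simp
    ring
  have hs₀_ne : s₀ ≠ 1 := by
    rw [Ne, div_eq_one_iff_eq hd0, eq_comm, Nat.cast_eq_one]
    omega
  have hcont : ContinuousAt (fun s ↦ (s - s₀) * (latticeDefect p s +
      riemannZeta ((p.natDegree + 1) * s - 1) * leadingTermDefect p s) +
      riemannZeta ((p.natDegree + 1) * s - 1) *
        ((p.leadingCoeff : ℂ) ^ (-s) / p.natDegree)) s₀ := by
    have hζ : DifferentiableAt ℂ (fun s ↦ riemannZeta ((p.natDegree + 1) * s - 1)) s₀ :=
      (differentiableAt_riemannZeta (hζ_arg.trans_ne hs₀_ne)).comp s₀ (by fun_prop)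
    have hdefect := differentiableAt_latticeDefect hp (by omega) hs₀_re
    have hleading := differentiableAt_leadingTermDefect hp (by omega)
      ((by positivity : (0 : ℝ) < 1 / (p.natDegree + 1)).trans hs₀_re)
    have hcoeff := differentiableAt_leadingCoeff_cpow_neg hp s₀
    exact ((by fun_prop : DifferentiableAt ℂ (· - s₀) s₀).mul (hdefect.add (hζ.mul hleading))).add
      (hζ.mul (hcoeff.div_const _)) |>.continuousAt
  have hlim := hcont.tendsto.mono_left (nhdsWithin_le_nhds (s := {s₀}ᶜ))
  rw [sub_self, zero_mul, zero_add, hζ_arg] at hlim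
  refine hlim.congr' ?_
  filter_upwards [self_mem_nhdsWithin] with s hs
  exact (sub_one_div_mul_latticeZeta (by omega) hs).symm

end Continuation

section SoFive

/-- The decomposition of `ℕ × ℕ` into the diagonal, the pairs `(i, j)` with `j < i` and those with
`i < j`, an off-diagonal pair being recorded by its smaller entry and the predecessor of the
difference. -/
def diagonalSumEquiv : ℕ ⊕ ℕ × ℕ ⊕ ℕ × ℕ ≃ ℕ × ℕ where
  toFun := Sum.elim (fun n ↦ (n, n))
    (Sum.elim (fun q ↦ (q.1 + 1 + q.2, q.1)) fun q ↦ (q.1, q.1 + 1 + q.2))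
  invFun q :=
    if q.1 = q.2 then .inl q.1
    else if q.2 < q.1 then .inr (.inl (q.2, q.1 - q.2 - 1))
    else .inr (.inr (q.1, q.2 - q.1 - 1))
  left_inv := by rintro (n | ⟨n, k⟩ | ⟨n, k⟩) <;> grind
  right_inv := by rintro ⟨i, j⟩; grind

lemma hasSum_prod_of_diagonal {M : Type*} [AddCommMonoid M] [TopologicalSpace M] [ContinuousAdd M]
    {f : ℕ × ℕ → M} {a b c : M} (hdiag : HasSum (fun n ↦ f (n, n)) a)
    (hgt : HasSum (fun q : ℕ × ℕ ↦ f (q.1 + 1 + q.2, q.1)) b)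
    (hlt : HasSum (fun q : ℕ × ℕ ↦ f (q.1, q.1 + 1 + q.2)) c) : HasSum f (a + (b + c)) :=
  diagonalSumEquiv.hasSum_iff.1 (hdiag.sum (hgt.sum hlt))

/-- The form `m n (m + n) (m + 2 n)` at positive integers `m = q.1 + 1`, `n = q.2 + 1`. The
irreducible representations of `so(5)` are indexed by `q` and have dimension `so5Form q / 6`. -/
def so5Form (q : ℕ × ℕ) : ℕ :=
  (q.1 + 1) * (q.2 + 1) * ((q.1 + 1) + (q.2 + 1)) * ((q.1 + 1) + 2 * (q.2 + 1))

/-- The polynomial whose lattice form is the form of `so(5)` on the pairs `m > n` (for `c = 1`) and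
on the pairs `m < n` (for `c = 2`). -/
noncomputable def so5Poly (c : ℝ) : ℝ[X] := (X + C 1) * (X + C 2) * (C c * X + C 3)

section SoFivePoly

variable {c : ℝ}

lemma natDegree_so5Poly (hc : c ≠ 0) : (so5Poly c).natDegree = 3 := by
  unfold so5Poly
  compute_degree!

lemma leadingCoeff_so5Poly (hc : c ≠ 0) : (so5Poly c).leadingCoeff = c := by
  rw [so5Poly, leadingCoeff_mul, leadingCoeff_mul, leadingCoeff_X_add_C, leadingCoeff_X_add_C,
    leadingCoeff_linear hc, one_mul, one_mul]

lemma eval_so5Poly_pos (hc : 0 ≤ c) (x : ℝ) (hx : 0 ≤ x) : 0 < (so5Poly c).eval x := by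
  simp only [so5Poly, eval_mul, eval_add, eval_X, eval_C]
  positivity

lemma latticeForm_so5Poly (hc : c ≠ 0) (q : ℕ × ℕ) :
    latticeForm (so5Poly c) q = ((q.1 + 1) * ((q.1 + 1) + (q.2 + 1)) *
      (2 * (q.1 + 1) + (q.2 + 1)) * (3 * (q.1 + 1) + c * (q.2 + 1))) := by
  rw [latticeForm, natDegree_so5Poly hc, so5Poly]
  simp only [eval_mul, eval_add, eval_X, eval_C]
  field_simp
  ring

lemma so5Form_of_gt (q : ℕ × ℕ) :
    (so5Form (q.1 + 1 + q.2, q.1) : ℝ) = latticeForm (so5Poly 1) q := by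
  rw [latticeForm_so5Poly one_ne_zero, so5Form]
  push_cast
  ring

lemma so5Form_of_lt (q : ℕ × ℕ) :
    (so5Form (q.1, q.1 + 1 + q.2) : ℝ) = latticeForm (so5Poly 2) q := by
  rw [latticeForm_so5Poly two_ne_zero, so5Form]
  push_cast
  ring

lemma hasSum_latticeForm_so5Poly_cpow_neg (hc : 0 < c) {s : ℂ} (hs : 1 / 2 < s.re) :
    HasSum (fun q ↦ (latticeForm (so5Poly c) q : ℂ) ^ (-s)) (latticeZeta (so5Poly c) s) := by
  have hdeg := natDegree_so5Poly hc.ne'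
  refine hasSum_latticeForm_cpow_neg (eval_so5Poly_pos hc.le) (by omega) ?_
  rw [hdeg]
  push_cast
  linarith

lemma differentiableOn_latticeZeta_so5Poly (hc : 0 < c) :
    DifferentiableOn ℂ (latticeZeta (so5Poly c)) ({s | 1 / 4 < s.re} \ {1 / 2, 1 / 3}) := by
  have hdeg := natDegree_so5Poly hc.ne'
  have hdiff := differentiableOn_latticeZeta (eval_so5Poly_pos hc.le) (by omega)
  rw [hdeg] at hdiff
  convert hdiff using 3 <;> norm_num

lemma tendsto_sub_mul_latticeZeta_so5Poly (hc : 0 < c) :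
    Tendsto (fun s ↦ (s - 1 / 3) * latticeZeta (so5Poly c) s) (𝓝[≠] (1 / 3))
      (𝓝 (riemannZeta (1 / 3) * ((c : ℂ) ^ (-(1 / 3) : ℂ) / 3))) := by
  have hdeg := natDegree_so5Poly hc.ne'
  simpa only [hdeg, leadingCoeff_so5Poly hc.ne', Nat.cast_ofNat] using
    tendsto_sub_mul_latticeZeta (eval_so5Poly_pos hc.le) (by omega)

end SoFivePoly

lemma hasSum_so5Form_diagonal_cpow_neg {s : ℂ} (hs : 1 / 4 < s.re) :
    HasSum (fun n ↦ (so5Form (n, n) : ℂ) ^ (-s)) ((6 : ℂ) ^ (-s) * riemannZeta (4 * s)) := by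
  have hterm (n : ℕ) : (so5Form (n, n) : ℂ) ^ (-s) =
      (6 : ℂ) ^ (-s) * ((n : ℂ) + 1) ^ (-(4 * s)) := by
    have hform : (so5Form (n, n) : ℂ) = (6 * ((n : ℝ) + 1) ^ 4 : ℝ) := by
      simp only [so5Form]
      push_cast
      ring
    rw [hform, ofReal_mul_pow_cpow_neg (by norm_num) (by positivity)]
    push_cast
    rfl
  simp only [hterm]
  exact (hasSum_natCast_add_one_cpow_neg (by simpa using by linarith)).mul_left _

/-- The meromorphic continuation to `1 / 4 < re s` of the Witten zeta function of `so(5)`. -/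
noncomputable def so5Zeta (s : ℂ) : ℂ :=
  riemannZeta (4 * s) + (6 : ℂ) ^ s * (latticeZeta (so5Poly 1) s + latticeZeta (so5Poly 2) s)

lemma mul_tsum_so5Form_cpow_neg {s : ℂ} (hs : 1 / 2 < s.re) :
    (6 : ℂ) ^ s * ∑' q, (so5Form q : ℂ) ^ (-s) = so5Zeta s := by
  have hgt : HasSum (fun q : ℕ × ℕ ↦ (so5Form (q.1 + 1 + q.2, q.1) : ℂ) ^ (-s))
      (latticeZeta (so5Poly 1) s) := by
    simpa only [← so5Form_of_gt, Complex.ofReal_natCast] using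
      hasSum_latticeForm_so5Poly_cpow_neg one_pos hs
  have hlt : HasSum (fun q : ℕ × ℕ ↦ (so5Form (q.1, q.1 + 1 + q.2) : ℂ) ^ (-s))
      (latticeZeta (so5Poly 2) s) := by
    simpa only [← so5Form_of_lt, Complex.ofReal_natCast] using
      hasSum_latticeForm_so5Poly_cpow_neg two_pos hs
  have hsum := hasSum_prod_of_diagonal (f := fun q ↦ (so5Form q : ℂ) ^ (-s))
    (hasSum_so5Form_diagonal_cpow_neg (by linarith)) hgt hlt
  rw [hsum.tsum_eq, mul_add, ← mul_assoc, ← Complex.cpow_add _ _ (by norm_num), add_neg_cancel,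
    Complex.cpow_zero, one_mul, so5Zeta]

lemma differentiableAt_riemannZeta_four_mul {s : ℂ} (hs : 1 / 4 < s.re) :
    DifferentiableAt ℂ (fun s ↦ riemannZeta (4 * s)) s := by
  refine (differentiableAt_riemannZeta fun h ↦ ?_).comp s (by fun_prop)
  have hre : 4 * s.re = 1 := by simpa using congrArg Complex.re h
  linarith

lemma differentiableOn_so5Zeta :
    DifferentiableOn ℂ so5Zeta ({s | 1 / 4 < s.re} \ {1 / 2, 1 / 3}) := by
  have hζ : DifferentiableOn ℂ (fun s ↦ riemannZeta (4 * s))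
      ({s | 1 / 4 < s.re} \ {1 / 2, 1 / 3}) :=
    fun s hs ↦ (differentiableAt_riemannZeta_four_mul hs.1).differentiableWithinAt
  have hsix : Differentiable ℂ fun s : ℂ ↦ (6 : ℂ) ^ s :=
    differentiable_id.const_cpow (.inl (by norm_num))
  exact hζ.add (hsix.differentiableOn.mul ((differentiableOn_latticeZeta_so5Poly one_pos).add
    (differentiableOn_latticeZeta_so5Poly two_pos)))

lemma six_rpow_mul_one_add_two_rpow_div_three :
    (6 : ℝ) ^ (1 / 3 : ℝ) * (1 + 2 ^ (-(1 / 3) : ℝ)) / 3 =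
      (2 ^ (1 / 3 : ℝ) + 1) / 3 ^ (2 / 3 : ℝ) := by
  have hthree : (3 : ℝ) ^ (1 / 3 : ℝ) * 3 ^ (2 / 3 : ℝ) = 3 := by
    rw [← Real.rpow_add (by norm_num)]
    norm_num
  rw [show (6 : ℝ) = 2 * 3 by norm_num, Real.mul_rpow (by norm_num) (by norm_num),
    Real.rpow_neg (by norm_num), div_eq_div_iff (by norm_num) (by positivity)]
  field_simp
  linear_combination hthree

lemma six_cpow_mul_one_add_two_cpow_div_three :
    (6 : ℂ) ^ (1 / 3 : ℂ) * (1 + 2 ^ (-(1 / 3) : ℂ)) / 3 =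
      ((2 ^ (1 / 3 : ℝ) + 1 : ℝ) : ℂ) / ((3 ^ (2 / 3 : ℝ) : ℝ) : ℂ) := by
  rw [← Complex.ofReal_div, ← six_rpow_mul_one_add_two_rpow_div_three]
  simp [Complex.ofReal_cpow]

lemma tendsto_sub_mul_so5Zeta :
    Tendsto (fun s ↦ (s - 1 / 3) * so5Zeta s) (𝓝[≠] (1 / 3))
      (𝓝 ((((2 : ℝ) ^ ((1 : ℝ) / 3) + 1 : ℝ) : ℂ) * riemannZeta (1 / 3) /
        (((3 : ℝ) ^ ((2 : ℝ) / 3) : ℝ) : ℂ))) := by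
  have hζ : Tendsto (fun s : ℂ ↦ (s - 1 / 3) * riemannZeta (4 * s)) (𝓝[≠] (1 / 3)) (𝓝 0) := by
    have hcont : ContinuousAt (fun s : ℂ ↦ (s - 1 / 3) * riemannZeta (4 * s)) (1 / 3) :=
      (by fun_prop : ContinuousAt (· - (1 / 3 : ℂ)) _).mul
        (differentiableAt_riemannZeta_four_mul (by norm_num)).continuousAt
    simpa using hcont.tendsto.mono_left nhdsWithin_le_nhds
  have hsix : Tendsto (fun s : ℂ ↦ (6 : ℂ) ^ s) (𝓝[≠] (1 / 3)) (𝓝 ((6 : ℂ) ^ (1 / 3 : ℂ))) :=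
    (continuous_id.const_cpow (.inl (by norm_num))).continuousAt.tendsto.mono_left
      nhdsWithin_le_nhds
  have hlim := hζ.add (hsix.mul ((tendsto_sub_mul_latticeZeta_so5Poly one_pos).add
    (tendsto_sub_mul_latticeZeta_so5Poly two_pos)))
  convert hlim using 2 with s
  · rw [so5Zeta]
    ring
  · rw [mul_div_right_comm, ← six_cpow_mul_one_add_two_cpow_div_three, Complex.ofReal_one,
      Complex.one_cpow, Complex.ofReal_ofNat]
    ring

lemma eqOn_so5Zeta {Z : ℂ → ℂ}
    (hZ : DifferentiableOn ℂ Z {s | 1 / 4 < s.re ∧ s ≠ 1 / 2 ∧ s ≠ 1 / 3})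
    (hZ_eq : ∀ s : ℂ, 1 / 2 < s.re → Z s = (6 : ℂ) ^ s * ∑' q, (so5Form q : ℂ) ^ (-s)) :
    EqOn Z so5Zeta {s | 1 / 4 < s.re ∧ s ≠ 1 / 2 ∧ s ≠ 1 / 3} := by
  have hset : {s : ℂ | 1 / 4 < s.re ∧ s ≠ 1 / 2 ∧ s ≠ 1 / 3} =
      {s | 1 / 4 < s.re} \ {1 / 2, 1 / 3} := by
    ext s
    simp
  rw [hset] at hZ ⊢
  exact eqOn_re_gt_diff_of_eqOn_re_gt (toFinite _) hZ differentiableOn_so5Zeta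
    fun s hs ↦ (hZ_eq s hs).trans (mul_tsum_so5Form_cpow_neg hs)

end SoFive

end WittenZeta

theorem stmt8 (Z : ℂ → ℂ)
    (hhol : DifferentiableOn ℂ Z
      {s : ℂ | 1 / 4 < s.re ∧ s ≠ 1 / 2 ∧ s ≠ 1 / 3})
    (hser : ∀ s : ℂ, 1 / 2 < s.re →
      Z s = (6 : ℂ) ^ s * ∑' p : ℕ × ℕ,
        ((((p.1 + 1) * (p.2 + 1) * ((p.1 + 1) + (p.2 + 1)) *
          ((p.1 + 1) + 2 * (p.2 + 1)) : ℕ) : ℂ)) ^ (-s)) :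
    Tendsto (fun s : ℂ => (s - 1 / 3) * Z s) (𝓝[≠] (1 / 3))
      (𝓝 ((((2 : ℝ) ^ ((1 : ℝ) / 3) + 1 : ℝ) : ℂ) * riemannZeta (1 / 3) /
        (((3 : ℝ) ^ ((2 : ℝ) / 3) : ℝ) : ℂ))) := by
  have re_gt : ∀ᶠ s : ℂ in 𝓝 (1 / 3), 1 / 4 < s.re :=
    (isOpen_lt continuous_const Complex.continuous_re).mem_nhds (by norm_num)
  have ne_half : ∀ᶠ s : ℂ in 𝓝 (1 / 3), s ≠ 1 / 2 := eventually_ne_nhds (by norm_num)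
  refine WittenZeta.tendsto_sub_mul_so5Zeta.congr' ?_
  filter_upwards [self_mem_nhdsWithin, re_gt.filter_mono nhdsWithin_le_nhds,
    ne_half.filter_mono nhdsWithin_le_nhds] with s hs_third hs_re hs_half
  rw [WittenZeta.eqOn_so5Zeta hhol hser ⟨hs_re, hs_half, hs_third⟩]
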